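/- Let n_1 ≥ n_2 ≥ ⋯ ≥ n_{k−2} ≥ 1 with k ≥ 3. Then the complete k-partite graph K_{n_1,…,n_{k−2},1,1} (with two parts of size 1 appended) is S-determined: every graph with the same Seidel spectrum is switching equivalent to a graph isomorphic to K_{n_1,…,n_{k−2},1,1}. -/

import Mathlib

open Polynomial Matrix Finset SimpleGraph

/- The Seidel matrix `S(G) = J - I - 2A(G)` of a simple graph `G`. -/
open scoped Classical in
noncomputable def seidelMatrix {V : Type*} [Fintype V] [DecidableEq V]
    (G : SimpleGraph V) : Matrix V V ℝ :=
  (Matrix.of fun _ _ => (1 : ℝ)) - 1 - 2 • G.adjMatrix ℝ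

/-- Two graphs on the same vertex set are switching equivalent iff their Seidel
matrices are conjugate by a diagonal `±1` matrix. -/
def SwitchingEquiv {V : Type*} [Fintype V] [DecidableEq V]
    (G H : SimpleGraph V) : Prop :=
  ∃ ε : V → ℝ, (∀ v, ε v = 1 ∨ ε v = -1) ∧
    seidelMatrix H = Matrix.diagonal ε * seidelMatrix G * Matrix.diagonal ε

/-- A graph `G` is determined, up to switching, by its Seidel spectrum
(`S`-determined) if every graph with the same Seidel spectrum is switching
equivalent to a graph isomorphic to `G`. -/
def SDetermined {V : Type} [Fintype V] [DecidableEq V] (G : SimpleGraph V) : Prop :=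
  ∀ (W : Type) [Fintype W] [DecidableEq W] (H : SimpleGraph W),
    (seidelMatrix H).charpoly = (seidelMatrix G).charpoly →
    ∃ H' : SimpleGraph W, SwitchingEquiv H H' ∧ Nonempty (H' ≃g G)

/-!
For a complete multipartite graph, `S + I = U (2I - J) Uᵀ` with `U` the incidence matrix of the
parts, so `S + I` has at most one negative eigenvalue. Hence so does `S(H) + I` for every graph `H`
with the same Seidel spectrum. Switch `H` so that some vertex is isolated; then `-A` is nonnegative
on a hyperplane. By the argument of Smith, a vertex nonadjacent to both ends of an edge is then
isolated, so `H` consists of a complete multipartite graph and isolated vertices, and one more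
switching turns the latter into a further part.

It remains to recover the part sizes `aᵢ`. With `N = ∑ aᵢ` and `D = ∏ (X - 2aᵢ)`, padded by a power
of `X` to degree `N`, the characteristic polynomial of `S + I` is half of `(2 - N) D + X D'`. This
Euler equation determines `D` up to a multiple of `X ^ (N - 2)`. Two parts of size `1` give `S + I`
the eigenvalue `2`, which forces a part of size `1` in every complete multipartite graph with the
same spectrum. Both polynomials `D` therefore vanish at `2`, so they are equal.
-/

section Determinant

variable {R n : Type*} [CommRing R] [Fintype n] [DecidableEq n]

theorem evalRingHom_mapMatrix_charmatrix (M : Matrix n n R) (t : R) :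
    (evalRingHom t).mapMatrix (charmatrix M) = scalar n t - M := by
  ext i j
  by_cases h : i = j <;> simp [h]

theorem mul_det_scalar_add_vecMulVec (t : R) (u v : n → R) :
    t * (scalar n t + vecMulVec u v).det = t ^ Fintype.card n * (t + v ⬝ᵥ u) := by
  rcases isEmpty_or_nonempty n with hn | hn
  · simp
  have h := congrArg (evalRingHom t) (charpoly_vecMulVec (-u) v)
  rw [charpoly, RingHom.map_det, evalRingHom_mapMatrix_charmatrix, neg_vecMulVec,
    sub_neg_eq_add] at h
  obtain ⟨k, hk⟩ := Nat.exists_eq_add_one_of_ne_zero (Fintype.card_ne_zero (α := n))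
  simp only [h, hk, neg_dotProduct, dotProduct_comm u, coe_evalRingHom, eval_sub, eval_pow, eval_X,
    eval_smul, smul_eq_mul, Nat.add_sub_cancel]
  ring

theorem det_add_vecMulVec_of_isRegular {A : Matrix n n R} (hA : IsRegular A.det) (u v : n → R) :
    (A + vecMulVec u v).det = A.det + v ⬝ᵥ A.adjugate *ᵥ u := by
  have hadj : A.adjugate * (A + vecMulVec u v) =
      scalar n A.det + vecMulVec (A.adjugate *ᵥ u) v := by
    rw [mul_add, adjugate_mul, mul_vecMulVec, smul_one_eq_diagonal, scalar_apply]
  have hpow : A.det * A.adjugate.det = A.det ^ Fintype.card n := by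
    rw [← det_mul, mul_adjugate, det_smul, det_one, mul_one]
  refine (hA.pow (Fintype.card n)).left ?_
  change A.det ^ _ * _ = A.det ^ _ * _
  rw [← mul_det_scalar_add_vecMulVec, ← hadj, det_mul, ← mul_assoc, hpow]

/-- The **matrix determinant lemma**. Both sides are values at `0` of the same identity for
`charmatrix (-A)`, whose determinant is monic, hence regular, so that `A` may be singular. -/
theorem det_add_vecMulVec (A : Matrix n n R) (u v : n → R) :
    (A + vecMulVec u v).det = A.det + v ⬝ᵥ A.adjugate *ᵥ u := by
  have hA : (evalRingHom 0).mapMatrix (charmatrix (-A)) = A := by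
    rw [evalRingHom_mapMatrix_charmatrix, map_zero, zero_sub, neg_neg]
  have hC (w : n → R) : evalRingHom 0 ∘ (C ∘ w) = w := by ext; simp
  have huv : (evalRingHom 0).mapMatrix (vecMulVec (C ∘ u) (C ∘ v)) = vecMulVec u v := by
    ext; simp [vecMulVec_apply]
  have hadj : evalRingHom 0 ∘ ((charmatrix (-A)).adjugate *ᵥ (C ∘ u)) = A.adjugate *ᵥ u := by
    ext i
    rw [Function.comp_apply, RingHom.map_mulVec, hC, ← RingHom.mapMatrix_apply,
      RingHom.map_adjugate, hA]
  have h := congrArg (evalRingHom 0) <| det_add_vecMulVec_of_isRegular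
    (A := charmatrix (-A)) (charpoly_monic (-A)).isRegular (C ∘ u) (C ∘ v)
  rwa [map_add, RingHom.map_det, RingHom.map_det, map_add, hA, huv, RingHom.map_dotProduct, hadj,
    hC] at h

theorem det_diagonal_add_vecMulVec (d u v : n → R) :
    (diagonal d + vecMulVec u v).det = ∏ i, d i + ∑ i, u i * v i * ∏ j ∈ univ.erase i, d j := by
  rw [det_add_vecMulVec, det_diagonal, adjugate_diagonal, dotProduct]
  congr! 2 with i
  rw [mulVec_diagonal]
  ring

end Determinant

section NonnegOnHyperplane

variable {V W : Type*} [Fintype V] [Fintype W]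

/-- The quadratic form of `M` is nonnegative on a hyperplane `w ⬝ᵥ x = 0`, or everywhere if `w = 0`.
For symmetric `M` this says that `M` has at most one negative eigenvalue. -/
def NonnegOnHyperplane (M : Matrix V V ℝ) : Prop :=
  ∃ w : V → ℝ, ∀ x : V → ℝ, w ⬝ᵥ x = 0 → 0 ≤ x ⬝ᵥ M *ᵥ x

theorem exists_eq_mul_mul_transpose_of_charpoly_eq [DecidableEq V] {M N : Matrix V V ℝ}
    (hM : M.IsHermitian) (hN : N.IsHermitian) (hMN : M.charpoly = N.charpoly) :
    ∃ P : Matrix V V ℝ, N = P * M * Pᵀ := by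
  let P : Matrix V V ℝ := hM.eigenvectorUnitary
  let Q : Matrix V V ℝ := hN.eigenvectorUnitary
  have hstar (A : Matrix V V ℝ) : star A = Aᵀ := conjTranspose_eq_transpose_of_trivial A
  have hP : Pᵀ * M * P = diagonal hM.eigenvalues := by
    simpa [Unitary.conjStarAlgAut_apply, hstar] using hM.conjStarAlgAut_star_eigenvectorUnitary
  have hQ : N = Q * diagonal hN.eigenvalues * Qᵀ := by
    simpa [Unitary.conjStarAlgAut_apply, hstar] using hN.spectral_theorem
  refine ⟨Q * Pᵀ, ?_⟩
  calc N = Q * (Pᵀ * M * P) * Qᵀ := by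
        rw [hP, (hM.eigenvalues_eq_eigenvalues_iff hN).2 hMN, ← hQ]
    _ = Q * Pᵀ * M * (Q * Pᵀ)ᵀ := by
        simp only [transpose_mul, transpose_transpose, Matrix.mul_assoc]

namespace NonnegOnHyperplane

variable {M : Matrix V V ℝ}

theorem mul_mul_transpose (h : NonnegOnHyperplane M) (P : Matrix W V ℝ) :
    NonnegOnHyperplane (P * M * Pᵀ) := by
  obtain ⟨w, hw⟩ := h
  refine ⟨P *ᵥ w, fun x hx => ?_⟩
  have hwx : w ⬝ᵥ Pᵀ *ᵥ x = 0 := by rwa [dotProduct_mulVec, vecMul_transpose]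
  rw [← mulVec_mulVec, ← mulVec_mulVec, dotProduct_mulVec, ← mulVec_transpose]
  exact hw _ hwx

theorem submatrix (h : NonnegOnHyperplane M) (e : W ≃ V) :
    NonnegOnHyperplane (M.submatrix e e) := by
  classical
  have hP : M.submatrix e e = (1 : Matrix V V ℝ).submatrix e id * M *
      ((1 : Matrix V V ℝ).submatrix e id)ᵀ := by
    ext i j
    simp [mul_apply, one_apply]
  exact hP ▸ h.mul_mul_transpose _

theorem of_charpoly_eq [DecidableEq V] [DecidableEq W] {N : Matrix W W ℝ}
    (h : NonnegOnHyperplane M) (hM : M.IsHermitian) (hN : N.IsHermitian)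
    (hMN : M.charpoly = N.charpoly) : NonnegOnHyperplane N := by
  have hcard : Fintype.card V = Fintype.card W := by
    rw [← charpoly_natDegree_eq_dim M, hMN, charpoly_natDegree_eq_dim]
  let e : V ≃ W := Fintype.equivOfCardEq hcard
  obtain ⟨P, rfl⟩ := exists_eq_mul_mul_transpose_of_charpoly_eq (hM.submatrix e.symm) hN
    ((charpoly_reindex e M).trans hMN)
  exact (h.submatrix e.symm).mul_mul_transpose P

/-- The **reverse Cauchy-Schwarz inequality**. -/
theorem dotProduct_mulVec_mul_le_sq (h : NonnegOnHyperplane M) (hM : M.IsSymm) {x : V → ℝ}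
    (hx : x ⬝ᵥ M *ᵥ x < 0) (y : V → ℝ) :
    (x ⬝ᵥ M *ᵥ x) * (y ⬝ᵥ M *ᵥ y) ≤ (x ⬝ᵥ M *ᵥ y) ^ 2 := by
  obtain ⟨w, hw⟩ := h
  have hyx : y ⬝ᵥ M *ᵥ x = x ⬝ᵥ M *ᵥ y := by
    rw [dotProduct_mulVec, ← mulVec_transpose, hM.eq, dotProduct_comm]
  have hwx : w ⬝ᵥ x ≠ 0 := fun h0 => hx.not_ge (hw x h0)
  let z := (w ⬝ᵥ y) • x - (w ⬝ᵥ x) • y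
  have hwz : w ⬝ᵥ z = 0 := by
    simp only [z, dotProduct_sub, dotProduct_smul, smul_eq_mul]
    ring
  have hz : (x ⬝ᵥ M *ᵥ x) * (z ⬝ᵥ M *ᵥ z) =
      ((w ⬝ᵥ y) * (x ⬝ᵥ M *ᵥ x) - (w ⬝ᵥ x) * (x ⬝ᵥ M *ᵥ y)) ^ 2 +
        (w ⬝ᵥ x) ^ 2 * ((x ⬝ᵥ M *ᵥ x) * (y ⬝ᵥ M *ᵥ y) - (x ⬝ᵥ M *ᵥ y) ^ 2) := by
    simp only [z, mulVec_sub, mulVec_smul, dotProduct_sub, sub_dotProduct, smul_dotProduct,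
      dotProduct_smul, smul_eq_mul, hyx]
    ring
  have hz_nonpos := mul_nonpos_of_nonpos_of_nonneg hx.le (hw z hwz)
  rw [hz] at hz_nonpos
  refine sub_nonpos.1 (nonpos_of_mul_nonpos_right (a := (w ⬝ᵥ x) ^ 2) ?_ (by positivity))
  linarith [sq_nonneg ((w ⬝ᵥ y) * (x ⬝ᵥ M *ᵥ x) - (w ⬝ᵥ x) * (x ⬝ᵥ M *ᵥ y))]

end NonnegOnHyperplane

theorem nonnegOnHyperplane_smul_one_sub_vecMulVec [DecidableEq V] {c : ℝ} (hc : 0 ≤ c)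
    (u : V → ℝ) : NonnegOnHyperplane (c • (1 : Matrix V V ℝ) - vecMulVec u u) := by
  refine ⟨u, fun x hx => ?_⟩
  rw [sub_mulVec, smul_mulVec, one_mulVec, vecMulVec_mulVec, hx]
  simpa using mul_nonneg hc (dotProduct_self_star_nonneg x)

end NonnegOnHyperplane

section SeidelSwitch

variable {V : Type*}

/-- Seidel switching of `G` with respect to `U`: two distinct vertices on the same side of `U` stay
as they are, and adjacency is reversed between `U` and its complement. -/
def seidelSwitch (G : SimpleGraph V) (U : Set V) : SimpleGraph V where
  Adj u v := u ≠ v ∧ (G.Adj u v ↔ (u ∈ U ↔ v ∈ U))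
  symm := ⟨fun u v h => ⟨h.1.symm, by rw [G.adj_comm, h.2, iff_comm (a := u ∈ U)]⟩⟩
  loopless := ⟨fun _ h => h.1 rfl⟩

theorem seidelSwitch_adj {G : SimpleGraph V} {U : Set V} {u v : V} :
    (seidelSwitch G U).Adj u v ↔ u ≠ v ∧ (G.Adj u v ↔ (u ∈ U ↔ v ∈ U)) :=
  Iff.rfl

theorem isIsolated_seidelSwitch_neighborSet (G : SimpleGraph V) (v : V) :
    (seidelSwitch G (G.neighborSet v)).IsIsolated v := by
  simp [IsIsolated, seidelSwitch_adj]

theorem seidelSwitch_support_adj {G : SimpleGraph V} {u v : V} :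
    (seidelSwitch G G.support).Adj u v ↔ G.Adj u v ∨ ¬(u ∈ G.support ↔ v ∈ G.support) := by
  by_cases h : G.Adj u v
  · simp [seidelSwitch_adj, h, h.ne, h.mem_support_left, h.mem_support_right]
  · grind [seidelSwitch_adj]

/-- Switching with respect to the support turns the isolated vertices into a further part. -/
theorem isCompleteMultipartite_seidelSwitch_support {G : SimpleGraph V}
    (h : ∀ a b c, G.IsPathGraph3Compl b a c → G.IsIsolated b) :
    (seidelSwitch G G.support).IsCompleteMultipartite := by
  refine ⟨fun a b c hab hbc => ?_⟩
  simp only [seidelSwitch_support_adj, not_or, not_not] at hab hbc ⊢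
  refine ⟨fun hac => ?_, hab.2.trans hbc.2⟩
  have hb : G.IsIsolated b := h a b c ⟨hac, fun hba => hab.1 hba.symm, hbc.1⟩
  exact G.notMem_support_iff_isIsolated.2 hb (hab.2.1 hac.mem_support_left)

end SeidelSwitch

section Seidel

variable {V W : Type*} [Fintype V] [DecidableEq V] [Fintype W] [DecidableEq W]

theorem seidelMatrix_apply (G : SimpleGraph V) [DecidableRel G.Adj] (u v : V) :
    seidelMatrix G u v = if u = v then 0 else if G.Adj u v then -1 else 1 := by
  rw [seidelMatrix, two_nsmul]
  by_cases huv : u = v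
  · simp [huv]
  · by_cases h : G.Adj u v <;> simp [huv, h]

theorem seidelMatrix_add_one (G : SimpleGraph V) [DecidableRel G.Adj] :
    seidelMatrix G + 1 = vecMulVec 1 1 - (2 : ℝ) • G.adjMatrix ℝ := by
  ext u v
  rcases eq_or_ne u v with rfl | huv
  · simp [seidelMatrix_apply]
  · by_cases h : G.Adj u v <;> norm_num [seidelMatrix_apply, vecMulVec_apply, huv, h]

theorem isSymm_seidelMatrix (G : SimpleGraph V) : (seidelMatrix G).IsSymm := by
  classical
  ext u v
  simp only [transpose_apply, seidelMatrix_apply, eq_comm, G.adj_comm]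

theorem isHermitian_seidelMatrix_add_one (G : SimpleGraph V) :
    (seidelMatrix G + 1).IsHermitian := by
  rw [IsHermitian, conjTranspose_eq_transpose_of_trivial]
  exact (isSymm_seidelMatrix G).add isSymm_one

theorem charpoly_seidelMatrix_of_iso {G : SimpleGraph V} {H : SimpleGraph W} (e : G ≃g H) :
    (seidelMatrix G).charpoly = (seidelMatrix H).charpoly := by
  classical
  rw [← charpoly_reindex e.toEquiv]
  congr 1
  ext u v
  have hadj : G.Adj (e.symm u) (e.symm v) ↔ H.Adj u v := e.symm.map_adj_iff
  have heq : e.symm u = e.symm v ↔ u = v := e.symm.injective.eq_iff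
  change seidelMatrix G (e.symm u) (e.symm v) = _
  simp only [seidelMatrix_apply, hadj, heq]

theorem charpoly_add_one {R : Type*} [CommRing R] (M : Matrix V V R) :
    (M + 1).charpoly = M.charpoly.comp (X - 1) := by
  simpa [sub_eq_add_neg] using charpoly_sub_scalar M (-1)

theorem dotProduct_seidelMatrix_add_one_mulVec (G : SimpleGraph V) [DecidableRel G.Adj]
    (x : V → ℝ) :
    x ⬝ᵥ (seidelMatrix G + 1) *ᵥ x = (1 ⬝ᵥ x) ^ 2 - 2 * (x ⬝ᵥ G.adjMatrix ℝ *ᵥ x) := by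
  simp only [seidelMatrix_add_one, sub_mulVec, vecMulVec_mulVec, smul_mulVec, dotProduct_sub,
    dotProduct_smul, op_smul_eq_smul, smul_eq_mul, dotProduct_comm x 1]
  ring

theorem diagonal_mul_self_eq_one {ε : V → ℝ} (hε : ∀ v, ε v = 1 ∨ ε v = -1) :
    diagonal ε * diagonal ε = 1 := by
  rw [diagonal_mul_diagonal, ← diagonal_one]
  congr 1
  ext v
  exact mul_self_eq_one_iff.2 (hε v)

namespace SwitchingEquiv

variable {G H K : SimpleGraph V}

theorem trans (hGH : SwitchingEquiv G H) (hHK : SwitchingEquiv H K) : SwitchingEquiv G K := by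
  obtain ⟨ε, hε, hGH⟩ := hGH
  obtain ⟨δ, hδ, hHK⟩ := hHK
  refine ⟨δ * ε, fun v => ?_, ?_⟩
  · rcases hε v with h | h <;> rcases hδ v with h' | h' <;> simp [h, h']
  · ext u v
    simp only [hHK, hGH, mul_diagonal, diagonal_mul, Pi.mul_apply]
    ring

theorem charpoly_eq (h : SwitchingEquiv G H) :
    (seidelMatrix H).charpoly = (seidelMatrix G).charpoly := by
  obtain ⟨ε, hε, hGH⟩ := h
  rw [hGH, charpoly_mul_comm, ← mul_assoc, diagonal_mul_self_eq_one hε, one_mul]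

theorem nonnegOnHyperplane (h : SwitchingEquiv G H)
    (hG : NonnegOnHyperplane (seidelMatrix G + 1)) :
    NonnegOnHyperplane (seidelMatrix H + 1) :=
  hG.of_charpoly_eq (isHermitian_seidelMatrix_add_one G) (isHermitian_seidelMatrix_add_one H) <| by
    rw [charpoly_add_one, charpoly_add_one, h.charpoly_eq]

end SwitchingEquiv

theorem switchingEquiv_seidelSwitch (G : SimpleGraph V) (U : Set V) :
    SwitchingEquiv G (seidelSwitch G U) := by
  classical
  refine ⟨fun v => if v ∈ U then -1 else 1, fun v => ?_, ?_⟩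
  · by_cases hv : v ∈ U <;> simp [hv]
  · ext u v
    rw [mul_diagonal, diagonal_mul, seidelMatrix_apply, seidelMatrix_apply]
    by_cases huv : u = v
    · simp [huv]
    · by_cases h : G.Adj u v <;> by_cases hu : u ∈ U <;> by_cases hv : v ∈ U <;>
        simp [seidelSwitch_adj, huv, h, hu, hv]

end Seidel

section Recognition

variable {V : Type*} [Fintype V] {G : SimpleGraph V}

/-- An edge `bd` would span, together with the edge `ac`, a negative definite plane. -/
theorem isIsolated_of_isPathGraph3Compl [DecidableRel G.Adj]
    (h : NonnegOnHyperplane (-G.adjMatrix ℝ)) {a b c : V} (habc : G.IsPathGraph3Compl b a c) :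
    G.IsIsolated b := by
  classical
  intro d hbd
  let e (v : V) : V → ℝ := Pi.single v 1
  let s : ℝ := G.adjMatrix ℝ a d + G.adjMatrix ℝ c d
  let x := e a + e c
  let y := (2 : ℝ) • e b + e d
  have hform (u v : V) : e u ⬝ᵥ -G.adjMatrix ℝ *ᵥ e v = -G.adjMatrix ℝ u v := by
    simp [e]
  have hx : x ⬝ᵥ -G.adjMatrix ℝ *ᵥ x = -2 := by
    simp only [x, mulVec_add, dotProduct_add, add_dotProduct, hform]
    norm_num [habc.adj, habc.adj.symm]
  have hy : y ⬝ᵥ -G.adjMatrix ℝ *ᵥ y = -4 := by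
    simp only [y, mulVec_add, mulVec_smul, dotProduct_add, add_dotProduct, dotProduct_smul,
      smul_dotProduct, hform]
    norm_num [hbd, hbd.symm]
  have hxy : x ⬝ᵥ -G.adjMatrix ℝ *ᵥ y = -s := by
    have hab : ¬G.Adj a b := fun h => habc.not_adj_fst h.symm
    have hcb : ¬G.Adj c b := fun h => habc.not_adj_snd h.symm
    simp only [x, y, s, mulVec_add, mulVec_smul, dotProduct_add, add_dotProduct, dotProduct_smul,
      hform, adjMatrix_apply, hab, hcb]
    simp [add_comm]
  have hs2 : s ^ 2 ≤ 4 := by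
    by_cases had : G.Adj a d <;> by_cases hcd : G.Adj c d <;> norm_num [s, had, hcd]
  have hCS := h.dotProduct_mulVec_mul_le_sq (isSymm_adjMatrix G).neg (hx.trans_lt (by norm_num)) y
  rw [hx, hy, hxy] at hCS
  linarith

variable [DecidableEq V]

theorem adjMatrix_mulVec_single_of_isIsolated [DecidableRel G.Adj] {v : V} (hv : G.IsIsolated v) :
    G.adjMatrix ℝ *ᵥ Pi.single v 1 = 0 := by
  ext u
  simp [G.adj_comm u v, hv u]

/-- The coordinate at an isolated vertex can be chosen so as to make the coordinates sum to zero,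
which leaves only the adjacency form. -/
theorem nonnegOnHyperplane_neg_adjMatrix [DecidableRel G.Adj] {v : V} (hv : G.IsIsolated v)
    (h : NonnegOnHyperplane (seidelMatrix G + 1)) : NonnegOnHyperplane (-G.adjMatrix ℝ) := by
  obtain ⟨w, hw⟩ := h
  refine ⟨w - w v • 1, fun x hx => ?_⟩
  let y := x - (1 ⬝ᵥ x) • Pi.single v 1
  have hwy : w ⬝ᵥ y = 0 := by
    simpa [y, sub_dotProduct, dotProduct_sub, mul_comm] using hx
  have hy : 1 ⬝ᵥ y = 0 := by simp [y, dotProduct_sub]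
  have hAy : G.adjMatrix ℝ *ᵥ y = G.adjMatrix ℝ *ᵥ x := by
    simp [y, mulVec_sub, mulVec_smul, adjMatrix_mulVec_single_of_isIsolated hv]
  have hform : y ⬝ᵥ G.adjMatrix ℝ *ᵥ y = x ⬝ᵥ G.adjMatrix ℝ *ᵥ x := by
    rw [hAy, dotProduct_mulVec, ← mulVec_transpose, transpose_adjMatrix, hAy, dotProduct_comm]
  have := hw y hwy
  rw [dotProduct_seidelMatrix_add_one_mulVec, hy, hform] at this
  rw [neg_mulVec, dotProduct_neg]
  linarith

theorem exists_switchingEquiv_isCompleteMultipartite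
    (h : NonnegOnHyperplane (seidelMatrix G + 1)) :
    ∃ H, SwitchingEquiv G H ∧ H.IsCompleteMultipartite := by
  classical
  rcases isEmpty_or_nonempty V with hV | ⟨⟨v⟩⟩
  · exact ⟨G, ⟨1, fun v => isEmptyElim v, Subsingleton.elim _ _⟩, ⟨fun a => isEmptyElim a⟩⟩
  let K := seidelSwitch G (G.neighborSet v)
  have hGK : SwitchingEquiv G K := switchingEquiv_seidelSwitch G _
  have hv : K.IsIsolated v := isIsolated_seidelSwitch_neighborSet G v
  have hA := nonnegOnHyperplane_neg_adjMatrix hv (hGK.nonnegOnHyperplane h)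
  exact ⟨seidelSwitch K K.support, hGK.trans (switchingEquiv_seidelSwitch K _),
    isCompleteMultipartite_seidelSwitch_support fun _ _ _ => isIsolated_of_isPathGraph3Compl hA⟩

end Recognition

section Multipartite

variable {ι : Type*} [DecidableEq ι]

/-- The incidence matrix between the vertices and the parts of `completeMultipartiteGraph V`. -/
def partMatrix (V : ι → Type*) : Matrix (Σ i, V i) ι ℝ :=
  of fun x i => if x.1 = i then 1 else 0

theorem partMatrix_apply (V : ι → Type*) (x : Σ i, V i) (i : ι) :
    partMatrix V x i = if x.1 = i then 1 else 0 :=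
  rfl

variable [Fintype ι] (V : ι → Type*)

theorem partMatrix_mulVec_one : partMatrix V *ᵥ 1 = 1 := by
  ext x
  simp [mulVec, dotProduct, partMatrix_apply]

theorem partMatrix_mul_transpose_partMatrix :
    partMatrix V * (partMatrix V)ᵀ =
      vecMulVec 1 1 - (completeMultipartiteGraph V).adjMatrix ℝ := by
  ext x y
  by_cases h : x.1 = y.1 <;> simp [mul_apply, partMatrix_apply, h]

variable [∀ i, Fintype (V i)]

theorem transpose_partMatrix_mul_partMatrix :
    (partMatrix V)ᵀ * partMatrix V = diagonal fun i => (Fintype.card (V i) : ℝ) := by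
  ext i j
  rw [mul_apply, Fintype.sum_sigma]
  rcases eq_or_ne i j with rfl | h
  · simp [partMatrix_apply]
  · simp [partMatrix_apply, h, h.symm]

variable [∀ i, DecidableEq (V i)]

theorem seidelMatrix_completeMultipartiteGraph_add_one :
    seidelMatrix (completeMultipartiteGraph V) + 1 =
      partMatrix V * ((2 : ℝ) • (1 : Matrix ι ι ℝ) - vecMulVec 1 1) * (partMatrix V)ᵀ := by
  have hJ : partMatrix V * (vecMulVec 1 1 : Matrix ι ι ℝ) * (partMatrix V)ᵀ = vecMulVec 1 1 := by
    rw [mul_vecMulVec, vecMulVec_mul, vecMul_transpose, partMatrix_mulVec_one]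
  rw [Matrix.mul_sub, Matrix.sub_mul, hJ, Matrix.mul_smul, Matrix.smul_mul, Matrix.mul_one,
    partMatrix_mul_transpose_partMatrix, seidelMatrix_add_one, two_smul, two_smul]
  abel

theorem nonnegOnHyperplane_seidelMatrix_completeMultipartiteGraph :
    NonnegOnHyperplane (seidelMatrix (completeMultipartiteGraph V) + 1) := by
  rw [seidelMatrix_completeMultipartiteGraph_add_one]
  exact (nonnegOnHyperplane_smul_one_sub_vecMulVec zero_le_two 1).mul_mul_transpose _

end Multipartite

section PartSizes

variable {ι κ : Type*} [Fintype ι] [Fintype κ]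

/-- The polynomial `∏ (X - 2 aᵢ)`, padded with zero roots to the degree `∑ aᵢ`: the characteristic
polynomial of the block diagonal matrix with blocks `2J` of sizes `aᵢ`. -/
noncomputable def blockPoly (a : ι → ℕ) : ℝ[X] :=
  X ^ (∑ i, a i - Fintype.card ι) * ∏ i, (X - C (2 * (a i : ℝ)))

/-- The characteristic polynomial of `S + I`, where `S` is the Seidel matrix of the complete
multipartite graph with parts of sizes `aᵢ`. -/
noncomputable def multipartitePoly [DecidableEq ι] (a : ι → ℕ) : ℝ[X] :=
  X ^ (∑ i, a i - Fintype.card ι) * (∏ i, (X - C (2 * (a i : ℝ))) +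
    ∑ i, C (a i : ℝ) * ∏ j ∈ univ.erase i, (X - C (2 * (a j : ℝ))))

theorem card_le_sum_of_pos {a : ι → ℕ} (ha : ∀ i, 0 < a i) : Fintype.card ι ≤ ∑ i, a i := by
  simpa using card_nsmul_le_sum univ a 1 fun i _ => ha i

theorem charpoly_seidelMatrix_completeMultipartiteGraph_add_one [DecidableEq ι] (V : ι → Type*)
    [∀ i, Fintype (V i)] [∀ i, DecidableEq (V i)] [∀ i, Nonempty (V i)] :
    (seidelMatrix (completeMultipartiteGraph V) + 1).charpoly =
      multipartitePoly fun i => Fintype.card (V i) := by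
  let a (i : ι) : ℝ := Fintype.card (V i)
  let Q : Matrix ι ι ℝ := (2 : ℝ) • 1 - vecMulVec 1 1
  have hcard : Fintype.card ι ≤ Fintype.card (Σ i, V i) := by
    rw [Fintype.card_sigma]
    exact card_le_sum_of_pos fun i => Fintype.card_pos
  have hQ : charmatrix (Q * diagonal a) =
      diagonal (fun i => X - C (2 * a i)) + vecMulVec 1 (C ∘ a) := by
    ext1 i j
    rcases eq_or_ne i j with rfl | h
    · simp only [Q, charmatrix_apply_eq, mul_diagonal, Matrix.sub_apply, Matrix.smul_apply,
        Matrix.add_apply, one_apply_eq, diagonal_apply_eq, vecMulVec_apply, Pi.one_apply,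
        Function.comp_apply, smul_eq_mul, map_mul, map_sub, map_one]
      ring
    · simp [Q, h]
  rw [seidelMatrix_completeMultipartiteGraph_add_one, Matrix.mul_assoc,
    charpoly_mul_comm_of_le _ _ hcard, Matrix.mul_assoc, transpose_partMatrix_mul_partMatrix,
    charpoly, hQ, det_diagonal_add_vecMulVec, Fintype.card_sigma, multipartitePoly]
  simp [a]

theorem X_mul_derivative_X_pow {R : Type*} [CommSemiring R] (n : ℕ) :
    X * derivative (X ^ n : R[X]) = (n : R[X]) * X ^ n := by
  cases n with
  | zero => simp
  | succ n => rw [derivative_X_pow, C_eq_natCast, Nat.add_sub_cancel]; ring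

theorem X_mul_derivative_prod_X_sub_C {R : Type*} [CommRing R] [DecidableEq ι] (c : ι → R) :
    X * derivative (∏ i, (X - C (c i))) =
      (Fintype.card ι : R[X]) * ∏ i, (X - C (c i)) +
        ∑ i, C (c i) * ∏ j ∈ univ.erase i, (X - C (c j)) := by
  have hcard : ∑ i, (X - C (c i)) * ∏ j ∈ univ.erase i, (X - C (c j)) =
      (Fintype.card ι : R[X]) * ∏ i, (X - C (c i)) := by
    simp only [mul_prod_erase univ (fun i => X - C (c i)) (mem_univ _), sum_const, card_univ,
      nsmul_eq_mul]
  rw [← hcard, derivative_prod_finset, mul_sum, ← sum_add_distrib]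
  refine sum_congr rfl fun i _ => ?_
  rw [derivative_X_sub_C]
  ring

theorem two_mul_multipartitePoly [DecidableEq ι] {a : ι → ℕ} (ha : ∀ i, 0 < a i) :
    2 * multipartitePoly a =
      C (2 - ∑ i, (a i : ℝ)) * blockPoly a + X * derivative (blockPoly a) := by
  have hsum : C (∑ i, (a i : ℝ)) =
      ((∑ i, a i - Fintype.card ι : ℕ) : ℝ[X]) + (Fintype.card ι : ℝ[X]) := by
    rw [← Nat.cast_add, Nat.sub_add_cancel (card_le_sum_of_pos ha)]
    simp
  have hprod := X_mul_derivative_prod_X_sub_C fun i => 2 * (a i : ℝ)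
  simp only [C_mul, C_ofNat, mul_assoc, ← mul_sum] at hprod
  simp only [multipartitePoly, blockPoly, derivative_mul, C_sub, hsum, C_mul, C_ofNat]
  linear_combination -(∏ i, (X - 2 * C (a i : ℝ))) *
    X_mul_derivative_X_pow (R := ℝ) (∑ i, a i - Fintype.card ι) -
    X ^ (∑ i, a i - Fintype.card ι) * hprod

theorem eval_two_blockPoly_eq_zero {a : ι → ℕ} {i : ι} (hi : a i = 1) :
    (blockPoly a).eval 2 = 0 := by
  rw [blockPoly, eval_mul, eval_prod, prod_eq_zero (mem_univ i), mul_zero]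
  simp [hi]

theorem eval_two_multipartitePoly [DecidableEq ι] (a : ι → ℕ) :
    (multipartitePoly a).eval 2 = 2 ^ (∑ i, a i - Fintype.card ι) * (∏ i, (2 - 2 * (a i : ℝ)) +
      ∑ i, (a i : ℝ) * ∏ j ∈ univ.erase i, (2 - 2 * (a j : ℝ))) := by
  simp [multipartitePoly, eval_finsetSum, eval_prod]

theorem eval_two_multipartitePoly_eq_zero [DecidableEq ι] {a : ι → ℕ} {i₁ i₂ : ι} (hi : i₁ ≠ i₂)
    (h₁ : a i₁ = 1) (h₂ : a i₂ = 1) : (multipartitePoly a).eval 2 = 0 := by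
  have hprod (s : Finset ι) {i : ι} (his : i ∈ s) (hai : a i = 1) :
      ∏ j ∈ s, (2 - 2 * (a j : ℝ)) = 0 := prod_eq_zero his (by simp [hai])
  have herase (i : ι) : ∏ j ∈ univ.erase i, (2 - 2 * (a j : ℝ)) = 0 := by
    rcases eq_or_ne i₁ i with rfl | h
    · exact hprod _ (mem_erase.2 ⟨hi.symm, mem_univ i₂⟩) h₂
    · exact hprod _ (mem_erase.2 ⟨h, mem_univ i₁⟩) h₁
  simp [eval_two_multipartitePoly, hprod _ (mem_univ i₁) h₁, herase]

theorem prod_add_sum_mul_prod_erase {K : Type*} [Field K] [DecidableEq ι] {d : ι → K}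
    (hd : ∀ i, d i ≠ 0) (u : ι → K) :
    ∏ i, d i + ∑ i, u i * ∏ j ∈ univ.erase i, d j = (∏ i, d i) * (1 + ∑ i, u i / d i) := by
  rw [mul_add, mul_one, mul_sum]
  congr! 2 with i
  rw [← mul_prod_erase univ d (mem_univ i)]
  field_simp [hd i]

theorem sum_div_sub_one_ne_two {a : ι → ℕ} (ha : ∀ i, 2 ≤ a i) (hsum : ∑ i, a i ≠ 2) :
    ∑ i, (a i : ℝ) / (a i - 1) ≠ 2 := by
  have hpos (i : ι) : (0 : ℝ) < a i - 1 := sub_pos.2 (by exact_mod_cast ha i)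
  rcases lt_trichotomy (Fintype.card ι) 1 with hι | hι | hι
  · have := Fintype.card_eq_zero_iff.1 (Nat.lt_one_iff.1 hι)
    simp
  · obtain ⟨i, hi⟩ := Fintype.card_eq_one_iff.1 hι
    have : Unique ι := ⟨⟨i⟩, hi⟩
    rw [Fintype.sum_unique] at hsum ⊢
    rw [Ne, div_eq_iff (hpos _).ne']
    refine mt (fun h => ?_) hsum
    have : (a default : ℝ) = 2 := by linarith
    exact_mod_cast this
  · have : Nonempty ι := Fintype.card_pos_iff.1 (zero_lt_one.trans hι)
    refine ne_of_gt ?_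
    calc (2 : ℝ) ≤ Fintype.card ι := by exact_mod_cast hι
      _ = ∑ i : ι, 1 := by simp
      _ < ∑ i, (a i : ℝ) / (a i - 1) :=
        sum_lt_sum_of_nonempty univ_nonempty fun i _ => (one_lt_div (hpos i)).2 (sub_one_lt _)

theorem eval_two_multipartitePoly_ne_zero [DecidableEq ι] {a : ι → ℕ} (ha : ∀ i, 2 ≤ a i)
    (hsum : ∑ i, a i ≠ 2) : (multipartitePoly a).eval 2 ≠ 0 := by
  have hpos (i : ι) : (0 : ℝ) < a i - 1 := sub_pos.2 (by exact_mod_cast ha i)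
  have hd (i : ι) : (2 - 2 * a i : ℝ) ≠ 0 := by linarith [hpos i]
  have hdiv (i : ι) : (a i : ℝ) / (2 - 2 * a i) = -1 / 2 * (a i / (a i - 1)) := by
    rw [div_mul_div_comm, div_eq_div_iff (hd i) (mul_ne_zero two_ne_zero (hpos i).ne')]
    ring
  rw [eval_two_multipartitePoly, prod_add_sum_mul_prod_erase hd]
  refine mul_ne_zero (by positivity) (mul_ne_zero (prod_ne_zero_iff.2 fun i _ => hd i) ?_)
  simp only [hdiv, ← mul_sum]
  intro h
  exact sum_div_sub_one_ne_two ha hsum (by linarith)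

theorem eq_zero_of_X_mul_derivative_eq {R : Type*} [CommRing R] [IsDomain R] [CharZero R]
    {D : R[X]} {t x : R} (h : X * derivative D = C t * D) (hx : x ≠ 0) (hD : D.IsRoot x) :
    D = 0 := by
  have hcoeff (j : ℕ) (hj : D.coeff j ≠ 0) : (j : R) = t := by
    have hXD : (X * derivative D).coeff j = j * D.coeff j := by
      cases j with
      | zero => simp
      | succ j => rw [coeff_X_mul, coeff_derivative, Nat.cast_succ, mul_comm]
    rw [h, coeff_C_mul] at hXD
    exact (mul_right_cancel₀ hj hXD).symm
  have hcard : #D.support ≤ 1 := by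
    refine card_le_one.2 fun i hi j hj => Nat.cast_injective (R := R) ?_
    rw [hcoeff i (mem_support_iff.1 hi), hcoeff j (mem_support_iff.1 hj)]
  rw [IsRoot, ← C_mul_X_pow_eq_self hcard, eval_mul, eval_C, eval_pow, eval_X] at hD
  exact leadingCoeff_eq_zero.1 ((mul_eq_zero.1 hD).resolve_right (pow_ne_zero _ hx))

theorem blockPoly_eq_of_multipartitePoly_eq [DecidableEq ι] [DecidableEq κ] {a : ι → ℕ}
    {b : κ → ℕ} (ha : ∀ i, 0 < a i) (hb : ∀ j, 0 < b j) (hsum : ∑ i, a i = ∑ j, b j)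
    (h : multipartitePoly a = multipartitePoly b) {x : ℝ} (hx : x ≠ 0)
    (hax : (blockPoly a).eval x = 0) (hbx : (blockPoly b).eval x = 0) :
    blockPoly a = blockPoly b := by
  have hsum' : ∑ i, (a i : ℝ) = ∑ j, (b j : ℝ) := by exact_mod_cast hsum
  have hD : X * derivative (blockPoly a - blockPoly b) =
      C (∑ i, (a i : ℝ) - 2) * (blockPoly a - blockPoly b) := by
    have hab := congrArg (2 * ·) h
    simp only [two_mul_multipartitePoly ha, two_mul_multipartitePoly hb, hsum', C_sub] at hab
    rw [derivative_sub, hsum', C_sub]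
    linear_combination hab
  exact sub_eq_zero.1 (eq_zero_of_X_mul_derivative_eq hD hx (by simp [hax, hbx]))

theorem filter_roots_blockPoly {a : ι → ℕ} (ha : ∀ i, 0 < a i) :
    (blockPoly a).roots.filter (· ≠ 0) = (univ.val.map a).map fun k : ℕ => 2 * (k : ℝ) := by
  have hprod : ∏ i, (X - C (2 * (a i : ℝ))) ≠ 0 :=
    prod_ne_zero_iff.2 fun i _ => X_sub_C_ne_zero _
  rw [blockPoly, roots_mul (mul_ne_zero (pow_ne_zero _ X_ne_zero) hprod), roots_X_pow,
    roots_prod _ _ hprod, Multiset.filter_add, Multiset.filter_eq_nil.2, zero_add]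
  · have hne (i : ι) : 2 * (a i : ℝ) ≠ 0 := by simp [(ha i).ne']
    simp only [roots_X_sub_C, Multiset.bind_singleton, Multiset.map_map, Multiset.filter_map,
      Function.comp_def, hne, ne_eq, not_false_eq_true, Multiset.filter_true]
  · intro x hx
    simp [Multiset.mem_singleton.1 (Multiset.mem_of_mem_nsmul hx)]

theorem map_univ_eq_of_blockPoly_eq {a : ι → ℕ} {b : κ → ℕ} (ha : ∀ i, 0 < a i)
    (hb : ∀ j, 0 < b j) (h : blockPoly a = blockPoly b) : univ.val.map a = univ.val.map b := by
  refine Multiset.map_injective (f := fun k : ℕ => 2 * (k : ℝ)) (fun x y hxy => ?_) ?_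
  · simpa using hxy
  · rw [← filter_roots_blockPoly ha, h, filter_roots_blockPoly hb]

theorem exists_equiv_of_map_univ_eq {α : Type*} {a : ι → α} {b : κ → α}
    (h : univ.val.map a = univ.val.map b) : ∃ e : ι ≃ κ, ∀ i, b (e i) = a i := by
  classical
  have hfib (x : α) : Nonempty ({i // a i = x} ≃ {j // b j = x}) := by
    rw [← Fintype.card_eq, Fintype.card_subtype, Fintype.card_subtype]
    have := congrArg (Multiset.count x) h
    rw [Multiset.count_map, Multiset.count_map] at this
    simpa [Finset.card, Finset.filter_val, eq_comm] using this
  exact ⟨Equiv.ofFiberEquiv fun x => (hfib x).some, fun i => Equiv.ofFiberEquiv_map _ i⟩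

theorem map_univ_eq_of_multipartitePoly_eq [DecidableEq ι] [DecidableEq κ] {a : ι → ℕ}
    {b : κ → ℕ} (ha : ∀ i, 0 < a i) (hb : ∀ j, 0 < b j) (hsum : ∑ i, a i = ∑ j, b j)
    (hsum2 : ∑ i, a i ≠ 2) {i₁ i₂ : ι} (hi : i₁ ≠ i₂) (h₁ : a i₁ = 1) (h₂ : a i₂ = 1)
    (h : multipartitePoly a = multipartitePoly b) : univ.val.map a = univ.val.map b := by
  obtain ⟨j, hj⟩ : ∃ j, b j = 1 := by
    by_contra! hb1
    refine eval_two_multipartitePoly_ne_zero (a := b) (fun j => ?_) (hsum ▸ hsum2) ?_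
    · have := hb j
      have := hb1 j
      omega
    · rw [← h, eval_two_multipartitePoly_eq_zero hi h₁ h₂]
  exact map_univ_eq_of_blockPoly_eq ha hb <| blockPoly_eq_of_multipartitePoly_eq ha hb hsum h
    two_ne_zero (eval_two_blockPoly_eq_zero h₁) (eval_two_blockPoly_eq_zero hj)

end PartSizes

section SDetermined

theorem nonempty_iso_completeMultipartiteGraph {ι κ : Type*} {V : ι → Type*} {V' : κ → Type*}
    (e : ι ≃ κ) (f : ∀ i, Nonempty (V i ≃ V' (e i))) :
    Nonempty (completeMultipartiteGraph V ≃g completeMultipartiteGraph V') :=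
  ⟨⟨Equiv.sigmaCongr e fun i => (f i).some, by simp [Equiv.sigmaCongr]⟩⟩

theorem nonempty_iso_of_charpoly_seidelMatrix_eq {ι κ : Type*} [Fintype ι] [DecidableEq ι]
    [Fintype κ] [DecidableEq κ] {V : ι → Type*} [∀ i, Fintype (V i)] [∀ i, DecidableEq (V i)]
    [∀ i, Nonempty (V i)] {V' : κ → Type*} [∀ j, Fintype (V' j)] [∀ j, DecidableEq (V' j)]
    [∀ j, Nonempty (V' j)] (hι : 3 ≤ Fintype.card ι) {i₁ i₂ : ι} (hi : i₁ ≠ i₂)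
    (h₁ : Fintype.card (V i₁) = 1) (h₂ : Fintype.card (V i₂) = 1)
    (h : (seidelMatrix (completeMultipartiteGraph V)).charpoly =
      (seidelMatrix (completeMultipartiteGraph V')).charpoly) :
    Nonempty (completeMultipartiteGraph V ≃g completeMultipartiteGraph V') := by
  have hpos (i : ι) : 0 < Fintype.card (V i) := Fintype.card_pos
  have hpos' (j : κ) : 0 < Fintype.card (V' j) := Fintype.card_pos
  have hsum : ∑ i, Fintype.card (V i) = ∑ j, Fintype.card (V' j) := by
    simpa only [charpoly_natDegree_eq_dim, Fintype.card_sigma] using congrArg natDegree h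
  have hsum2 : ∑ i, Fintype.card (V i) ≠ 2 := by
    have := card_le_sum_of_pos hpos
    omega
  have hpoly : multipartitePoly (fun i => Fintype.card (V i)) =
      multipartitePoly fun j => Fintype.card (V' j) := by
    rw [← charpoly_seidelMatrix_completeMultipartiteGraph_add_one V,
      ← charpoly_seidelMatrix_completeMultipartiteGraph_add_one V', charpoly_add_one, h,
      charpoly_add_one]
  obtain ⟨e, he⟩ := exists_equiv_of_map_univ_eq
    (map_univ_eq_of_multipartitePoly_eq hpos hpos' hsum hsum2 hi h₁ h₂ hpoly)
  exact nonempty_iso_completeMultipartiteGraph e fun i => ⟨Fintype.equivOfCardEq (he i).symm⟩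

theorem exists_switchingEquiv_isCompleteMultipartite_of_charpoly_eq {ι W : Type*}
    [Fintype ι] [DecidableEq ι] (V : ι → Type*) [∀ i, Fintype (V i)] [∀ i, DecidableEq (V i)]
    [Fintype W] [DecidableEq W] (H : SimpleGraph W)
    (h : (seidelMatrix H).charpoly = (seidelMatrix (completeMultipartiteGraph V)).charpoly) :
    ∃ K, SwitchingEquiv H K ∧ K.IsCompleteMultipartite := by
  refine exists_switchingEquiv_isCompleteMultipartite <|
    (nonnegOnHyperplane_seidelMatrix_completeMultipartiteGraph V).of_charpoly_eq
      (isHermitian_seidelMatrix_add_one _) (isHermitian_seidelMatrix_add_one H) ?_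
  rw [charpoly_add_one, charpoly_add_one, h]

theorem sDetermined_append_one_one_general {ι : Type} [Fintype ι] [DecidableEq ι]
    (V : ι → Type) [∀ i, Fintype (V i)] [∀ i, DecidableEq (V i)] [∀ i, Nonempty (V i)]
    (hι : 3 ≤ Fintype.card ι) {i₁ i₂ : ι} (hi : i₁ ≠ i₂) (h₁ : Fintype.card (V i₁) = 1)
    (h₂ : Fintype.card (V i₂) = 1) : SDetermined (completeMultipartiteGraph V) := by
  classical
  intro W _ _ H hH
  obtain ⟨K, hHK, hK⟩ :=
    exists_switchingEquiv_isCompleteMultipartite_of_charpoly_eq V H hH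
  obtain ⟨κ, V', hV', ⟨f⟩⟩ := isCompleteMultipartite_iff.1 hK
  have : Finite (Σ j, V' j) := .of_equiv W f.toEquiv
  have : Finite κ := .of_surjective (Sigma.fst : (Σ j, V' j) → κ) Sigma.fst_surjective
  have (j : κ) : Finite (V' j) := .of_injective (Sigma.mk j) sigma_mk_injective
  have := Fintype.ofFinite κ
  have (j : κ) := Fintype.ofFinite (V' j)
  obtain ⟨g⟩ := nonempty_iso_of_charpoly_seidelMatrix_eq (V := V) (V' := V') hι hi h₁ h₂ <| by
    rw [← hH, ← hHK.charpoly_eq, charpoly_seidelMatrix_of_iso f]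
  exact ⟨K, hHK, ⟨f.trans g.symm⟩⟩

end SDetermined

/-- **Example.** For `n_1 ≥ ⋯ ≥ n_{k-2} ≥ 1` (here `k - 2 = m ≥ 1`, i.e. `k ≥ 3`),
the complete `k`-partite graph `K_{n_1,…,n_{k-2},1,1}`, whose parts are the `n i`
together with two further parts of size `1`, is determined, up to switching, by
its Seidel spectrum. -/
theorem sDetermined_append_one_one (m : ℕ) (hm : 1 ≤ m) (n : Fin m → ℕ)
    (hna : Antitone n) (hn : ∀ i, 1 ≤ n i) :
    SDetermined (completeMultipartiteGraph fun i : Fin (m + 2) =>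
      Fin (if h : (i : ℕ) < m then n ⟨i, h⟩ else 1)) := by
  have (i : Fin (m + 2)) : Nonempty (Fin (if h : (i : ℕ) < m then n ⟨i, h⟩ else 1)) :=
    Fin.pos_iff_nonempty.1 (by split_ifs; exacts [hn _, one_pos])
  exact sDetermined_append_one_one_general _ (i₁ := ⟨m, by omega⟩) (i₂ := ⟨m + 1, by omega⟩)
    (by simpa using hm) (by simp) (by simp) (by simp)
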